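/- For every ζ ∈ ℂ and every (y, t) ∈ ℂ⁵ one has the 6×6 matrix identities P_ζᵗ·I·P_ζ = I (so P_ζ ∈ SO(6, ℂ)) and P_ζ⁻¹·H(y₀′, y₁′, t)·P_ζ = H(y₀′ + ζy₁′, y₁′, t), where H(y₀′ + ζy₁′, y₁′, t) denotes H evaluated at the point with first pair of coordinates (y₀₀′ + ζy₀₁′, y₁₀′ + ζy₁₁′), second pair (y₀₁′, y₁₁′), and last coordinate t. -/

import Mathlib

/-- The 6×6 matrix `H(y,t)` representing the Heisenberg group element
`(y₀₀′, y₁₀′, y₀₁′, y₁₁′, t) = (a, b, c, d, t)` inside `SO(6, ℂ)`; here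
`⟨y₀′,y₀′⟩ = 2ab`, `⟨y₀′,y₁′⟩ = ad + cb`, `⟨y₁′,y₁′⟩ = 2cd`. -/
noncomputable def Hmat (a b c d t : ℂ) : Matrix (Fin 6) (Fin 6) ℂ :=
  !![1, 0, 0, 0, 0, 0;
     0, 1, 0, 0, 0, 0;
     a, c, 1, 0, 0, 0;
     -(a * b), -(t / 2) - (a * d + c * b) / 2, -b, 1, 0, -a;
     t / 2 - (a * d + c * b) / 2, -(c * d), -d, 0, 1, -c;
     b, d, 0, 0, 0, 1]
open scoped Matrix

/-- The quadratic form matrix `I = [[0, E₃],[E₃, 0]]` defining `SO(6, ℂ)`. -/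
noncomputable def Imat : Matrix (Fin 6) (Fin 6) ℂ :=
  !![0, 0, 0, 1, 0, 0;
     0, 0, 0, 0, 1, 0;
     0, 0, 0, 0, 0, 1;
     1, 0, 0, 0, 0, 0;
     0, 1, 0, 0, 0, 0;
     0, 0, 1, 0, 0, 0]

/-- `P_ζ`: the identity except that its `(2,1)` entry is `ζ` and its `(4,5)` entry is `−ζ`. -/
noncomputable def Pmat (ζ : ℂ) : Matrix (Fin 6) (Fin 6) ℂ :=
  !![1, 0, 0, 0, 0, 0;
     ζ, 1, 0, 0, 0, 0;
     0, 0, 1, 0, 0, 0;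
     0, 0, 0, 1, -ζ, 0;
     0, 0, 0, 0, 1, 0;
     0, 0, 0, 0, 0, 1]

/-!
Split `6 = (2 + 1) + (2 + 1)`. Then `P_ζ` is the block diagonal matrix `diag(A, A⁻ᵗ)` with
`A = diag(g, 1)` and `g = [[1, 0], [ζ, 1]]`, and every such `diag(A, A⁻ᵗ)` preserves the split form.
In this splitting `H(y, t)` is built from the rows `v = (y₀₀′, y₀₁′)` and `w = (y₁₀′, y₁₁′)` and the
`2 × 2` block `K = -½(vᵗw + wᵗv + t[[0, 1], [-1, 0]])`. Conjugation replaces `v`, `w`, `K` by `vg`,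
`wg`, `gᵗKg`, and `gᵗ[[0, 1], [-1, 0]]g = (det g)[[0, 1], [-1, 0]]`, so `t` becomes `(det g)t`. For
the given `g` the determinant is `1`, and right multiplication by `g` adds `ζy₁′` to `y₀′`.
-/

section Block

variable {n R : Type*} [Fintype n] [DecidableEq n] [CommRing R]

/-- The Siegel Levi embedding `A ↦ diag(A, A⁻ᵗ)` of `GL(n)` into the orthogonal group of the split
form `[[0, 1], [1, 0]]`, which is Mathlib's `LieAlgebra.Orthogonal.JD`. As `A⁻¹ = 0` for singular
`A`, it is meaningful only for invertible `A`. -/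
noncomputable def splitLevi (A : Matrix n n R) : Matrix (n ⊕ n) (n ⊕ n) R :=
  .fromBlocks A 0 0 A⁻¹ᵀ

theorem transpose_splitLevi_mul_JD_mul_splitLevi {A : Matrix n n R} (hA : IsUnit A.det) :
    (splitLevi A)ᵀ * LieAlgebra.Orthogonal.JD n R * splitLevi A =
      LieAlgebra.Orthogonal.JD n R := by
  simp [splitLevi, LieAlgebra.Orthogonal.JD, Matrix.fromBlocks_transpose,
    Matrix.fromBlocks_multiply, ← Matrix.transpose_mul, hA]

theorem inv_splitLevi {A : Matrix n n R} (hA : IsUnit A.det) :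
    (splitLevi A)⁻¹ = .fromBlocks A⁻¹ 0 0 Aᵀ :=
  Matrix.inv_eq_left_inv <| by
    simp [splitLevi, Matrix.fromBlocks_multiply, ← Matrix.transpose_mul, hA]

theorem inv_fromBlocks_zero_zero_one {g : Matrix n n R} (hg : IsUnit g.det) :
    (Matrix.fromBlocks g 0 0 (1 : Matrix Unit Unit R))⁻¹ = .fromBlocks g⁻¹ 0 0 1 :=
  Matrix.inv_eq_left_inv <| by simp [Matrix.fromBlocks_multiply, hg]

/-- The action of `g ∈ GL(n)` on the Heisenberg group, as a matrix: the Siegel Levi element of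
`diag(g, 1)`. -/
noncomputable def heisenbergLevi (g : Matrix n n R) :
    Matrix ((n ⊕ Unit) ⊕ (n ⊕ Unit)) ((n ⊕ Unit) ⊕ (n ⊕ Unit)) R :=
  splitLevi (.fromBlocks g 0 0 1)

/-- The block shape of the Heisenberg matrices `H(y, t)`. The rows `v` and `w` collect the
coordinates `(y₀₀′, y₀₁′)` and `(y₁₀′, y₁₁′)`, so they cut across the pairs `y₀′`, `y₁′`. The
central coordinate is part of `K`, which is arbitrary here; the matrix preserves the split form
exactly when `K + Kᵗ = -(vᵗw + wᵗv)`. -/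
def heisenbergBlock (v w : n → R) (K : Matrix n n R) :
    Matrix ((n ⊕ Unit) ⊕ (n ⊕ Unit)) ((n ⊕ Unit) ⊕ (n ⊕ Unit)) R :=
  .fromBlocks
    (.fromBlocks 1 0 (.replicateRow Unit v) 1)
    0
    (.fromBlocks K (-.replicateCol Unit w) (.replicateRow Unit w) 0)
    (.fromBlocks 1 (-.replicateCol Unit v) 0 1)

theorem inv_heisenbergLevi_mul_heisenbergBlock_mul_heisenbergLevi {g : Matrix n n R}
    (hg : IsUnit g.det) (v w : n → R) (K : Matrix n n R) :
    (heisenbergLevi g)⁻¹ * heisenbergBlock v w K * heisenbergLevi g =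
      heisenbergBlock (v ᵥ* g) (w ᵥ* g) (gᵀ * K * g) := by
  have hdet : IsUnit (Matrix.fromBlocks g 0 0 (1 : Matrix Unit Unit R)).det := by simpa
  have hcol (u : n → R) :
      gᵀ * Matrix.replicateCol Unit u = Matrix.replicateCol Unit (u ᵥ* g) := by
    rw [← Matrix.replicateCol_mulVec, Matrix.mulVec_transpose]
  rw [heisenbergLevi, inv_splitLevi hdet, splitLevi, inv_fromBlocks_zero_zero_one hg]
  simp [heisenbergBlock, Matrix.fromBlocks_transpose, Matrix.fromBlocks_multiply,
    ← Matrix.transpose_mul, Matrix.replicateRow_vecMul, hcol, hg]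

end Block

section Two

variable {R : Type*} [CommRing R]

theorem transpose_mul_skew_mul_eq_det_smul (g : Matrix (Fin 2) (Fin 2) R) :
    gᵀ * !![0, 1; -1, 0] * g = g.det • !![0, 1; -1, 0] := by
  ext i j
  fin_cases i <;> fin_cases j <;>
    simp [Matrix.mul_apply, Fin.sum_univ_two, Matrix.det_fin_two] <;> ring

/-- The bilinear form `vᵗw + wᵗv + t[[0, 1], [-1, 0]]`; the lower left block `K` of `H(y, t)` is
`-½` times it. -/
def heisenbergForm (v w : Fin 2 → R) (t : R) : Matrix (Fin 2) (Fin 2) R :=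
  .vecMulVec v w + .vecMulVec w v + t • !![0, 1; -1, 0]

theorem transpose_mul_heisenbergForm_mul (g : Matrix (Fin 2) (Fin 2) R) (v w : Fin 2 → R) (t : R) :
    gᵀ * heisenbergForm v w t * g = heisenbergForm (v ᵥ* g) (w ᵥ* g) (g.det * t) := by
  simp only [heisenbergForm, mul_add, add_mul, Matrix.mul_vecMulVec, Matrix.vecMulVec_mul,
    Matrix.mulVec_transpose, mul_smul_comm, smul_mul_assoc, transpose_mul_skew_mul_eq_det_smul,
    smul_smul, mul_comm t]

end Two

/-- The partition `6 = (2 + 1) + (2 + 1)` of the rows and columns of `Pmat` and `Hmat`. -/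
def blockIndex : Fin 6 ≃ (Fin 2 ⊕ Unit) ⊕ (Fin 2 ⊕ Unit) where
  toFun := ![.inl (.inl 0), .inl (.inl 1), .inl (.inr ()),
    .inr (.inl 0), .inr (.inl 1), .inr (.inr ())]
  invFun := Sum.elim (Sum.elim ![0, 1] fun _ => 2) (Sum.elim ![3, 4] fun _ => 5)
  left_inv := by decide
  right_inv := by decide

/-- The `6 × 6` matrix through which `g ∈ GL(2, ℂ)` acts on the matrices `H(y, t)`. -/
noncomputable def leviMat (g : Matrix (Fin 2) (Fin 2) ℂ) : Matrix (Fin 6) (Fin 6) ℂ :=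
  (heisenbergLevi g).submatrix blockIndex blockIndex

theorem Imat_eq_submatrix_JD :
    Imat = (LieAlgebra.Orthogonal.JD (Fin 2 ⊕ Unit) ℂ).submatrix blockIndex blockIndex := by
  ext i j
  fin_cases i <;> fin_cases j <;> simp [Imat, LieAlgebra.Orthogonal.JD, blockIndex]

theorem Hmat_eq_submatrix_heisenbergBlock (v w : Fin 2 → ℂ) (t : ℂ) :
    Hmat (v 0) (w 0) (v 1) (w 1) t =
      (heisenbergBlock v w (-(1 / 2 : ℂ) • heisenbergForm v w t)).submatrix
        blockIndex blockIndex := by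
  ext i j
  fin_cases i <;> fin_cases j <;>
    simp [Hmat, heisenbergBlock, heisenbergForm, blockIndex, Matrix.vecMulVec_apply] <;> ring

theorem Pmat_eq_leviMat (ζ : ℂ) : Pmat ζ = leviMat !![1, 0; ζ, 1] := by
  have hinv : !![1, 0; ζ, 1]⁻¹ = !![1, 0; -ζ, 1] := by simp [Matrix.inv_def]
  rw [leviMat, heisenbergLevi, splitLevi, inv_fromBlocks_zero_zero_one (by simp), hinv]
  ext i j
  fin_cases i <;> fin_cases j <;> simp [Pmat, blockIndex]

theorem Pmat_conjugation_general {g : Matrix (Fin 2) (Fin 2) ℂ} (hg : IsUnit g.det)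
    (v w : Fin 2 → ℂ) (t : ℂ) :
    (leviMat g)ᵀ * Imat * leviMat g = Imat ∧
    (leviMat g)⁻¹ * Hmat (v 0) (w 0) (v 1) (w 1) t * leviMat g =
      Hmat ((v ᵥ* g) 0) ((w ᵥ* g) 0) ((v ᵥ* g) 1) ((w ᵥ* g) 1) (g.det * t) := by
  constructor
  · rw [Imat_eq_submatrix_JD, leviMat, Matrix.transpose_submatrix, Matrix.submatrix_mul_equiv,
      Matrix.submatrix_mul_equiv, heisenbergLevi,
      transpose_splitLevi_mul_JD_mul_splitLevi (by simpa using hg)]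
  · rw [Hmat_eq_submatrix_heisenbergBlock, Hmat_eq_submatrix_heisenbergBlock, leviMat,
      Matrix.inv_submatrix_equiv, Matrix.submatrix_mul_equiv, Matrix.submatrix_mul_equiv,
      inv_heisenbergLevi_mul_heisenbergBlock_mul_heisenbergLevi hg, mul_smul_comm,
      smul_mul_assoc, transpose_mul_heisenbergForm_mul]

/-- `P_ζᵗ·I·P_ζ = I` (so `P_ζ ∈ SO(6, ℂ)`), and
`P_ζ⁻¹·H(y₀′, y₁′, t)·P_ζ = H(y₀′ + ζy₁′, y₁′, t)`. -/
theorem Pmat_conjugation (ζ a b c d t : ℂ) :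
    (Pmat ζ)ᵀ * Imat * Pmat ζ = Imat ∧
    (Pmat ζ)⁻¹ * Hmat a b c d t * Pmat ζ = Hmat (a + ζ * c) (b + ζ * d) c d t := by
  simpa [Pmat_eq_leviMat, Matrix.vecMul_eq_sum, mul_comm ζ] using
    Pmat_conjugation_general (g := !![1, 0; ζ, 1]) (by simp) ![a, c] ![b, d] t
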